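/- Let α be a real number with α > 0 and let q be a real number with 0 < q < 1, real exponents being interpreted via the real power function. Then: (1) ∑_{i,j≥0} q^{2α i^2 + 4(1-α) ij + 2α j^2 + (2α-1)(i-j)} / ((q;q)_{2i+1} (q;q)_{2j}) = (-q, -q^{4α-1}, q^{4α}; q^{4α})_∞ / (q;q)_∞; (2) ∑_{i,j≥0} q^{2α i^2 + 4(1-α) ij + 2α j^2 + 2α i + (2-2α) j} / ((q;q)_{2i+1} (q;q)_{2j}) = (q^{8α};q^{8α})_∞^2 / ((q;q)_∞ · (q^{4α};q^{4α})_∞). -/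

import Mathlib

/-!
Put `d = i - j`. In both series the exponent is a function of `d` (carrying all of `α`) plus `4ij`
or `4ij + 2j`. With `d ≥ 0`, `D = 2d + 1`, and `N` the smaller of `2i + 1` and `2j`, the
denominator on the diagonals `d` and `-(d + 1)` is `(q;q)_N (q;q)_{N+D}`, where `N` is even on the
first and odd on the second. So the two diagonals interlace to one series over all `N ≥ 0`
(`tsum_of_interlaced`), namely

* `∑ q^{N(N+D-1)} / ((q;q)_N (q;q)_{N+D}) = (1 + q^D) / (q;q)_∞` for the first identity
  (`hasSum_durfeeShift`),
* `∑ q^{N(N+D)} / ((q;q)_N (q;q)_{N+D}) = 1 / (q;q)_∞`, the Durfee rectangle identity, for the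
  second (`hasSum_durfee`).

The sum over `d` that remains is a theta series with base `Q = q^{4α}`. In the first identity it
is evaluated by Jacobi's triple product (`hasSum_jacobi`) at `z = Q / q`, in the second by Gauss's
sum of `Q^{d(d+1)/2}` (`hasSum_gauss`).

The Durfee identity is proved analytically: the sum `F D` satisfies
`F D - F (D+1) = q^{D+1} (F (D+2) - F (D+1))` and converges to `1 / (q;q)_∞`, so it is constant.
The triple product follows from it by multiplying two Euler series (`hasSum_euler`) and summing
along diagonals.
-/

/-- Finite q-Pochhammer symbol `(a;q)_n = ∏_{k=0}^{n-1} (1 - a q^k)` over ℝ. -/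
noncomputable def qPochR (a q : ℝ) (n : ℕ) : ℝ :=
  ∏ k ∈ Finset.range n, (1 - a * q ^ k)

/-- Infinite q-Pochhammer symbol `(a;q)_∞ = ∏_{k=0}^{∞} (1 - a q^k)` over ℝ. -/
noncomputable def qPochInfR (a q : ℝ) : ℝ :=
  ∏' k : ℕ, (1 - a * q ^ k)

open Filter Topology

namespace PartialNahm

/-! ### The symbols `(q;q)_n` and `(a;q)_∞` -/

lemma qPochR_succ (a q : ℝ) (n : ℕ) : qPochR a q (n + 1) = qPochR a q n * (1 - a * q ^ n) :=
  Finset.prod_range_succ _ _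

lemma summable_factor (a : ℝ) {q : ℝ} (hq0 : 0 < q) (hq1 : q < 1) :
    Summable fun k : ℕ => ‖-(a * q ^ k)‖ := by
  have h := (summable_geometric_of_lt_one hq0.le hq1).mul_left |a|
  refine h.congr fun k => ?_
  rw [norm_neg, norm_mul, Real.norm_eq_abs, Real.norm_eq_abs, abs_of_pos (pow_pos hq0 k)]

lemma multipliable_factor (a : ℝ) {q : ℝ} (hq0 : 0 < q) (hq1 : q < 1) :
    Multipliable fun k : ℕ => 1 - a * q ^ k := by
  simpa only [sub_eq_add_neg] using multipliable_one_add_of_summable (summable_factor a hq0 hq1)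

lemma tendsto_qPochR (a : ℝ) {q : ℝ} (hq0 : 0 < q) (hq1 : q < 1) :
    Tendsto (qPochR a q) atTop (𝓝 (qPochInfR a q)) :=
  (multipliable_factor a hq0 hq1).hasProd.tendsto_prod_nat

lemma qq_factor_pos {q : ℝ} (hq0 : 0 < q) (hq1 : q < 1) (k : ℕ) : 0 < 1 - q * q ^ k := by
  rw [← pow_succ']
  exact sub_pos.2 (pow_lt_one₀ hq0.le hq1 k.succ_ne_zero)

lemma qq_pos {q : ℝ} (hq0 : 0 < q) (hq1 : q < 1) (n : ℕ) : 0 < qPochR q q n :=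
  Finset.prod_pos fun k _ => qq_factor_pos hq0 hq1 k

lemma qq_antitone {q : ℝ} (hq0 : 0 < q) (hq1 : q < 1) : Antitone (qPochR q q) := by
  refine antitone_nat_of_succ_le fun n => ?_
  rw [qPochR_succ]
  refine mul_le_of_le_one_right (qq_pos hq0 hq1 n).le ?_
  have : 0 < q * q ^ n := by positivity
  linarith

lemma qqInf_le {q : ℝ} (hq0 : 0 < q) (hq1 : q < 1) (n : ℕ) : qPochInfR q q ≤ qPochR q q n :=
  (qq_antitone hq0 hq1).le_of_tendsto (tendsto_qPochR q hq0 hq1) n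

lemma qqInf_pos {q : ℝ} (hq0 : 0 < q) (hq1 : q < 1) : 0 < qPochInfR q q := by
  refine lt_of_le_of_ne ?_ (Ne.symm ?_)
  · exact ge_of_tendsto' (tendsto_qPochR q hq0 hq1) fun n => (qq_pos hq0 hq1 n).le
  · have h := tprod_one_add_ne_zero_of_summable (f := fun k : ℕ => -(q * q ^ k))
      (fun k => by
        have := qq_factor_pos hq0 hq1 k
        rw [← sub_eq_add_neg]; exact this.ne') (summable_factor q hq0 hq1)
    simp only [← sub_eq_add_neg] at h
    exact h

/-! ### The Durfee rectangle identity -/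

/-- The `n`-th term of the Durfee rectangle series with excess `D`. -/
noncomputable def durfee (q : ℝ) (D n : ℕ) : ℝ :=
  q ^ (n * (n + D)) / (qPochR q q n * qPochR q q (n + D))

/-- The `n`-th term of the series of `durfee q (D + 1)` with `q ^ (n * (n + D))` in place of
`q ^ (n * (n + D + 1))`. -/
noncomputable def durfeeShift (q : ℝ) (D n : ℕ) : ℝ :=
  q ^ (n * (n + D)) / (qPochR q q n * qPochR q q (n + D + 1))

lemma durfee_nonneg {q : ℝ} (hq0 : 0 < q) (hq1 : q < 1) (D n : ℕ) : 0 ≤ durfee q D n :=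
  div_nonneg (by positivity) (mul_pos (qq_pos hq0 hq1 _) (qq_pos hq0 hq1 _)).le

lemma durfee_le {q : ℝ} (hq0 : 0 < q) (hq1 : q < 1) (D n : ℕ) :
    durfee q D n ≤ q ^ n / (qPochInfR q q * qPochInfR q q) := by
  have hP := qqInf_pos hq0 hq1
  have hn := qq_pos hq0 hq1 n
  unfold durfee
  gcongr ?_ / (?_ * ?_)
  · refine pow_le_pow_of_le_one hq0.le hq1.le ?_
    nlinarith [Nat.le_mul_self n, Nat.zero_le (n * D)]
  · exact qqInf_le hq0 hq1 _
  · exact qqInf_le hq0 hq1 _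

lemma summable_durfee_bound {q : ℝ} (hq0 : 0 < q) (hq1 : q < 1) :
    Summable fun n : ℕ => q ^ n / (qPochInfR q q * qPochInfR q q) :=
  (summable_geometric_of_lt_one hq0.le hq1).div_const _

lemma summable_durfee {q : ℝ} (hq0 : 0 < q) (hq1 : q < 1) (D : ℕ) : Summable (durfee q D) :=
  (summable_durfee_bound hq0 hq1).of_nonneg_of_le (durfee_nonneg hq0 hq1 D) (durfee_le hq0 hq1 D)

/-- As `D → ∞` only the term `n = 0`, which is `1 / (q;q)_D`, survives. -/
lemma tendsto_tsum_durfee {q : ℝ} (hq0 : 0 < q) (hq1 : q < 1) :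
    Tendsto (fun D => ∑' n, durfee q D n) atTop (𝓝 (1 / qPochInfR q q)) := by
  have hP := qqInf_pos hq0 hq1
  have key : Tendsto (fun D => ∑' n, durfee q D n) atTop
      (𝓝 (∑' n : ℕ, if n = 0 then 1 / qPochInfR q q else 0)) := by
    refine tendsto_tsum_of_dominated_convergence (summable_durfee_bound hq0 hq1) ?_ ?_
    · intro n
      rcases Nat.eq_zero_or_pos n with rfl | hn
      · simp only [durfee, zero_mul, pow_zero, zero_add, if_true]
        have h0 : qPochR q q 0 = 1 := by simp [qPochR]
        simp only [h0, one_mul]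
        exact tendsto_const_nhds.div (tendsto_qPochR q hq0 hq1) hP.ne'
      · rw [if_neg hn.ne']
        have hb : Tendsto (fun D : ℕ => q ^ D / (qPochInfR q q * qPochInfR q q)) atTop (𝓝 0) := by
          simpa using (tendsto_pow_atTop_nhds_zero_of_lt_one hq0.le hq1).div_const
            (qPochInfR q q * qPochInfR q q)
        refine squeeze_zero (fun D => durfee_nonneg hq0 hq1 D n) (fun D => ?_) hb
        have hn' := qq_pos hq0 hq1 n
        unfold durfee
        gcongr ?_ / (?_ * ?_)
        · refine pow_le_pow_of_le_one hq0.le hq1.le ?_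
          nlinarith [Nat.zero_le (n * n)]
        · exact qqInf_le hq0 hq1 _
        · exact qqInf_le hq0 hq1 _
    · refine Eventually.of_forall fun D n => ?_
      rw [Real.norm_of_nonneg (durfee_nonneg hq0 hq1 D n)]
      exact durfee_le hq0 hq1 D n
  simpa using key

lemma durfee_split {q : ℝ} (hq0 : 0 < q) (hq1 : q < 1) (D n : ℕ) :
    durfee q D n = durfeeShift q D n - q ^ (D + 1) * durfee q (D + 1) n := by
  have h1 := (qq_pos hq0 hq1 n).ne'
  have h2 := (qq_pos hq0 hq1 (n + D)).ne'
  have h3 := (qq_factor_pos hq0 hq1 (n + D)).ne'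
  simp only [durfee, durfeeShift, ← add_assoc, qPochR_succ q q (n + D)]
  field_simp
  ring

/-- Splitting `1 = q ^ n + (1 - q ^ n)` in the numerator of `durfeeShift` leaves two Durfee
series, the second one after the index shift `n ↦ n + 1`. -/
lemma hasSum_durfeeShift_aux {q : ℝ} (hq0 : 0 < q) (hq1 : q < 1) (D : ℕ) :
    HasSum (durfeeShift q D)
      ((∑' n, durfee q (D + 1) n) + q ^ (D + 1) * ∑' n, durfee q (D + 2) n) := by
  have hu : HasSum (fun n => durfeeShift q D n - durfee q (D + 1) n)
      (q ^ (D + 1) * ∑' n, durfee q (D + 2) n) := by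
    rw [← hasSum_nat_add_iff' 1]
    have h0 : durfeeShift q D 0 - durfee q (D + 1) 0 = 0 := by
      simp [durfee, durfeeShift]
    rw [Finset.sum_range_one, h0, sub_zero]
    refine ((summable_durfee hq0 hq1 (D + 2)).hasSum.mul_left (q ^ (D + 1))).congr_fun ?_
    intro n
    have h1 := (qq_pos hq0 hq1 n).ne'
    have h2 := (qq_pos hq0 hq1 (n + (D + 2))).ne'
    have h3 := (qq_factor_pos hq0 hq1 n).ne'
    simp only [durfee, durfeeShift, show n + 1 + D + 1 = n + (D + 2) by ring,
      show n + 1 + (D + 1) = n + (D + 2) by ring, qPochR_succ q q n]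
    field_simp
    ring
  simpa using (summable_durfee hq0 hq1 (D + 1)).hasSum.add hu

lemma tsum_durfee_eq_succ {q : ℝ} (hq0 : 0 < q) (hq1 : q < 1) (D : ℕ) :
    ∑' n, durfee q D n = ∑' n, durfee q (D + 1) n := by
  set F : ℕ → ℝ := fun D => ∑' n, durfee q D n with hF
  have hrec : ∀ D, F D - F (D + 1) = q ^ (D + 1) * (F (D + 2) - F (D + 1)) := by
    intro D
    have h := (hasSum_durfeeShift_aux hq0 hq1 D).sub
      ((summable_durfee hq0 hq1 (D + 1)).hasSum.mul_left (q ^ (D + 1)))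
    have h' := h.tsum_eq
    simp only [← durfee_split hq0 hq1] at h'
    simp only [hF, h']
    ring
  have mono : Monotone fun D => |F D - F (D + 1)| := by
    refine monotone_nat_of_le_succ fun D => ?_
    rw [hrec D, abs_mul, abs_of_pos (pow_pos hq0 _), abs_sub_comm]
    exact mul_le_of_le_one_left (abs_nonneg _) (pow_le_one₀ hq0.le hq1.le)
  have lim : Tendsto (fun D => |F D - F (D + 1)|) atTop (𝓝 0) := by
    have h := tendsto_tsum_durfee hq0 hq1
    have := (h.sub (h.comp (tendsto_add_atTop_nat 1))).abs
    simpa using this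
  have := mono.ge_of_tendsto lim D
  exact sub_eq_zero.1 (abs_nonpos_iff.1 this)

/-- The Durfee rectangle identity: consecutive differences `F D - F (D + 1)` of the sums do
not decrease in absolute value with `D` and tend to zero, so the sum does not depend on `D`. -/
theorem hasSum_durfee {q : ℝ} (hq0 : 0 < q) (hq1 : q < 1) (D : ℕ) :
    HasSum (durfee q D) (1 / qPochInfR q q) := by
  have hconst : ∀ N, ∑' n, durfee q N n = ∑' n, durfee q 0 n := by
    intro N
    induction N with
    | zero => rfl
    | succ N ih => rw [← tsum_durfee_eq_succ hq0 hq1, ih]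
  have h := tendsto_tsum_durfee hq0 hq1
  simp only [hconst] at h
  rw [← tendsto_nhds_unique tendsto_const_nhds h, ← hconst D]
  exact (summable_durfee hq0 hq1 D).hasSum

theorem hasSum_durfeeShift {q : ℝ} (hq0 : 0 < q) (hq1 : q < 1) (D : ℕ) :
    HasSum (durfeeShift q D) ((1 + q ^ (D + 1)) / qPochInfR q q) := by
  have h := hasSum_durfeeShift_aux hq0 hq1 D
  rw [(hasSum_durfee hq0 hq1 _).tsum_eq, (hasSum_durfee hq0 hq1 _).tsum_eq] at h
  convert h using 1
  ring

/-! ### Euler's product expansion -/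

/-- The `n`-th term of Euler's expansion of `(-z;q)_∞`. -/
noncomputable def euler (q z : ℝ) (n : ℕ) : ℝ := q ^ (n.choose 2) * z ^ n / qPochR q q n

lemma choose_two_succ (n : ℕ) : (n + 1).choose 2 = n + n.choose 2 := by
  rw [Nat.choose_succ_succ' n 1, Nat.choose_one_right]

lemma euler_nonneg {q : ℝ} (hq0 : 0 < q) (hq1 : q < 1) {z : ℝ} (hz : 0 < z) (n : ℕ) :
    0 ≤ euler q z n :=
  div_nonneg (by positivity) (qq_pos hq0 hq1 n).le

lemma euler_succ {q : ℝ} (hq0 : 0 < q) (hq1 : q < 1) (z : ℝ) (n : ℕ) :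
    euler q z (n + 1) = q ^ n * z / (1 - q * q ^ n) * euler q z n := by
  have h1 := (qq_pos hq0 hq1 n).ne'
  have h3 := (qq_factor_pos hq0 hq1 n).ne'
  simp only [euler, choose_two_succ, qPochR_succ]
  field_simp
  ring

lemma summable_euler {q : ℝ} (hq0 : 0 < q) (hq1 : q < 1) {z : ℝ} (hz : 0 < z) :
    Summable (euler q z) := by
  refine summable_of_ratio_test_tendsto_lt_one (l := 0) zero_lt_one ?_ ?_
  · refine Eventually.of_forall fun n => ?_
    have := qq_pos hq0 hq1 n
    unfold euler
    positivity
  · have h0 := tendsto_pow_atTop_nhds_zero_of_lt_one hq0.le hq1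
    have h : Tendsto (fun n : ℕ => q ^ n * z / (1 - q * q ^ n)) atTop (𝓝 (0 * z / (1 - q * 0))) :=
      (h0.mul_const z).div (tendsto_const_nhds.sub (h0.const_mul q)) (by simp)
    simp only [zero_mul, zero_div] at h
    refine h.congr fun n => ?_
    have hn := qq_factor_pos hq0 hq1 n
    have he : 0 < euler q z n := by
      have := qq_pos hq0 hq1 n
      unfold euler
      positivity
    rw [euler_succ hq0 hq1, norm_mul, mul_div_cancel_right₀ _ (norm_ne_zero_iff.2 he.ne'),
      Real.norm_of_nonneg (by positivity)]

lemma tsum_euler_step {q : ℝ} (hq0 : 0 < q) (hq1 : q < 1) {z : ℝ} (hz : 0 < z) :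
    ∑' n, euler q z n = (1 + z) * ∑' n, euler q (z * q) n := by
  have hzq : 0 < z * q := by positivity
  have hu : HasSum (fun n => euler q z n - euler q (z * q) n)
      (z * ∑' n, euler q (z * q) n) := by
    rw [← hasSum_nat_add_iff' 1]
    have h0 : euler q z 0 - euler q (z * q) 0 = 0 := by simp [euler]
    rw [Finset.sum_range_one, h0, sub_zero]
    refine ((summable_euler hq0 hq1 hzq).hasSum.mul_left z).congr_fun ?_
    intro n
    have h1 := (qq_pos hq0 hq1 n).ne'
    have h3 := (qq_factor_pos hq0 hq1 n).ne'
    simp only [euler, choose_two_succ, qPochR_succ]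
    field_simp
    ring
  have h := ((summable_euler hq0 hq1 hz).hasSum.sub (summable_euler hq0 hq1 hzq).hasSum).unique hu
  linarith

lemma tsum_euler_iterate {q : ℝ} (hq0 : 0 < q) (hq1 : q < 1) {z : ℝ} (hz : 0 < z) (N : ℕ) :
    ∑' n, euler q z n = qPochR (-z) q N * ∑' n, euler q (z * q ^ N) n := by
  induction N with
  | zero => simp [qPochR]
  | succ N ih =>
    rw [ih, tsum_euler_step hq0 hq1 (by positivity : 0 < z * q ^ N), qPochR_succ, pow_succ]
    simp only [mul_assoc]
    ring

/-- Euler: `(-z;q)_∞ = ∑ q^{n(n-1)/2} z^n / (q;q)_n`. -/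
theorem hasSum_euler {q : ℝ} (hq0 : 0 < q) (hq1 : q < 1) {z : ℝ} (hz : 0 < z) :
    HasSum (euler q z) (qPochInfR (-z) q) := by
  have h0 := tendsto_pow_atTop_nhds_zero_of_lt_one hq0.le hq1
  have lim : Tendsto (fun N : ℕ => ∑' n, euler q (z * q ^ N) n) atTop
      (𝓝 (∑' n : ℕ, euler q (z * 0) n)) := by
    refine tendsto_tsum_of_dominated_convergence (summable_euler hq0 hq1 hz) ?_ ?_
    · intro n
      unfold euler
      exact (((h0.const_mul z).pow n).const_mul _).div_const _
    · refine Eventually.of_forall fun N n => ?_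
      rw [Real.norm_of_nonneg (euler_nonneg hq0 hq1 (by positivity) n)]
      have := qq_pos hq0 hq1 n
      unfold euler
      gcongr
      exact mul_le_of_le_one_right hz.le (pow_le_one₀ hq0.le hq1.le)
  have hone : ∑' n : ℕ, euler q (z * 0) n = 1 := by
    rw [tsum_eq_single 0 fun n hn => by simp [euler, hn]]
    simp [euler, qPochR]
  rw [hone] at lim
  have h := (tendsto_qPochR (-z) hq0 hq1).mul lim
  simp only [← tsum_euler_iterate hq0 hq1 hz, mul_one] at h
  rw [← tendsto_nhds_unique tendsto_const_nhds h]
  exact (summable_euler hq0 hq1 hz).hasSum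

/-! ### Summation along diagonals -/

/-- A pair of natural numbers lies on or below the diagonal, as `(n + d, n)`, or strictly above
it, as `(n, n + d + 1)`. -/
def diagEquiv : (ℕ × ℕ) ⊕ (ℕ × ℕ) ≃ ℕ × ℕ where
  toFun := Sum.elim (fun x => (x.2 + x.1, x.2)) (fun x => (x.2, x.2 + x.1 + 1))
  invFun p := if p.2 ≤ p.1 then Sum.inl (p.1 - p.2, p.2) else Sum.inr (p.2 - p.1 - 1, p.1)
  left_inv := by
    rintro (⟨d, n⟩ | ⟨d, n⟩)
    · simp
    · have h : ¬ n + d + 1 ≤ n := by omega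
      simp only [Sum.elim_inr, h, if_false, Sum.inr.injEq, Prod.mk.injEq, and_true]
      omega
  right_inv := by
    rintro ⟨i, j⟩
    by_cases h : j ≤ i
    · simp only [h, if_true, Sum.elim_inl, Prod.mk.injEq, and_true]
      omega
    · simp only [h, if_false, Sum.elim_inr, Prod.mk.injEq, true_and]
      omega

lemma hasSum_diag {f : ℕ × ℕ → ℝ} {S : ℝ} {A B : ℕ → ℝ} (hf : HasSum f S)
    (hA : ∀ d, HasSum (fun n => f (n + d, n)) (A d))
    (hB : ∀ d, HasSum (fun n => f (n, n + d + 1)) (B d)) :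
    HasSum (fun d => A d + B d) S := by
  have h := diagEquiv.hasSum_iff.2 hf
  have h1 : Summable ((f ∘ diagEquiv) ∘ Sum.inl) := h.summable.comp_injective Sum.inl_injective
  have h2 : Summable ((f ∘ diagEquiv) ∘ Sum.inr) := h.summable.comp_injective Sum.inr_injective
  have hS := (HasSum.sum h1.hasSum h2.hasSum).unique h
  rw [← hS]
  exact (h1.hasSum.prod_fiberwise hA).add (h2.hasSum.prod_fiberwise hB)

lemma summable_of_diag {f : ℕ × ℕ → ℝ} {A B : ℕ → ℝ} (h0 : ∀ p, 0 ≤ f p)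
    (hA : ∀ d, HasSum (fun n => f (n + d, n)) (A d))
    (hB : ∀ d, HasSum (fun n => f (n, n + d + 1)) (B d))
    (hAB : Summable fun d => A d + B d) : Summable f := by
  have hA0 : ∀ d, 0 ≤ A d := fun d => (hA d).nonneg fun n => h0 _
  have hB0 : ∀ d, 0 ≤ B d := fun d => (hB d).nonneg fun n => h0 _
  have sA : Summable A := hAB.of_nonneg_of_le hA0 fun d => le_add_of_nonneg_right (hB0 d)
  have sB : Summable B := hAB.of_nonneg_of_le hB0 fun d => le_add_of_nonneg_left (hA0 d)
  have h1 : Summable ((f ∘ diagEquiv) ∘ Sum.inl) :=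
    (summable_prod_of_nonneg fun _ => h0 _).2
      ⟨fun d => (hA d).summable, sA.congr fun d => (hA d).tsum_eq.symm⟩
  have h2 : Summable ((f ∘ diagEquiv) ∘ Sum.inr) :=
    (summable_prod_of_nonneg fun _ => h0 _).2
      ⟨fun d => (hB d).summable, sB.congr fun d => (hB d).tsum_eq.symm⟩
  exact diagEquiv.summable_iff.1 (HasSum.sum h1.hasSum h2.hasSum).summable

/-- If the diagonals `i - j = d` and `i - j = -(d + 1)` of a nonnegative double series carry the
even and the odd terms of one series `c d * ∑ a d N`, then the double series sums to
`∑ c d * s d` with `s d = ∑ a d N`. -/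
lemma tsum_of_interlaced {f : ℕ × ℕ → ℝ} {a : ℕ → ℕ → ℝ} {c s : ℕ → ℝ} {S : ℝ}
    (h0 : ∀ p, 0 ≤ f p) (ha : ∀ d, HasSum (a d) (s d))
    (hA : ∀ d n, f (n + d, n) = c d * a d (2 * n))
    (hB : ∀ d n, f (n, n + d + 1) = c d * a d (2 * n + 1))
    (hS : HasSum (fun d => c d * s d) S) : ∑' p, f p = S := by
  have se : ∀ d, Summable fun n => a d (2 * n) := fun d =>
    (ha d).summable.comp_injective (i := fun n : ℕ => 2 * n) fun m n h => by
      simp only at h; omega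
  have so : ∀ d, Summable fun n => a d (2 * n + 1) := fun d =>
    (ha d).summable.comp_injective (i := fun n : ℕ => 2 * n + 1) fun m n h => by
      simp only at h; omega
  have hA' : ∀ d, HasSum (fun n => f (n + d, n)) (c d * ∑' n, a d (2 * n)) := fun d => by
    simpa only [hA] using (se d).hasSum.mul_left (c d)
  have hB' : ∀ d, HasSum (fun n => f (n, n + d + 1)) (c d * ∑' n, a d (2 * n + 1)) := fun d => by
    simpa only [hB] using (so d).hasSum.mul_left (c d)
  have hAB : (fun d => c d * ∑' n, a d (2 * n) + c d * ∑' n, a d (2 * n + 1)) =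
      fun d => c d * s d := by
    funext d
    rw [← mul_add, tsum_even_add_odd (se d) (so d), (ha d).tsum_eq]
  have hf : Summable f := summable_of_diag h0 hA' hB' (hAB ▸ hS.summable)
  have := hasSum_diag hf.hasSum hA' hB'
  rw [hAB] at this
  exact this.unique hS

/-! ### Jacobi's triple product -/

lemma choose_two_diag (n d : ℕ) :
    (n + d).choose 2 + (n + 1).choose 2 = n * (n + d) + d.choose 2 := by
  induction n with
  | zero => simp
  | succ n ih =>
    rw [show n + 1 + d = (n + d) + 1 by ring, choose_two_succ (n + d), choose_two_succ (n + 1)]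
    nlinarith

/-- Jacobi's triple product, with the terms of index `d` and `-(d + 1)` of the bilateral series
taken together. The product of the Euler series of `(-z;Q)_∞` and `(-w;Q)_∞`, where `z w = Q`,
is summed along diagonals, and each diagonal is a Durfee rectangle series. -/
theorem hasSum_jacobi {Q : ℝ} (hQ0 : 0 < Q) (hQ1 : Q < 1) {z w : ℝ} (hz : 0 < z) (hw : 0 < w)
    (hzw : z * w = Q) :
    HasSum (fun d : ℕ => Q ^ (d.choose 2) * z ^ d + Q ^ ((d + 1).choose 2) * w ^ (d + 1))
      (qPochInfR (-z) Q * qPochInfR (-w) Q * qPochInfR Q Q) := by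
  have hP := (qqInf_pos hQ0 hQ1).ne'
  have hprod : HasSum (fun p : ℕ × ℕ => euler Q z p.1 * euler Q w p.2)
      (qPochInfR (-z) Q * qPochInfR (-w) Q) :=
    (hasSum_euler hQ0 hQ1 hz).mul (hasSum_euler hQ0 hQ1 hw)
      ((summable_euler hQ0 hQ1 hz).mul_of_nonneg (summable_euler hQ0 hQ1 hw)
        (euler_nonneg hQ0 hQ1 hz) (euler_nonneg hQ0 hQ1 hw))
  have term : ∀ (x y : ℝ) (d n : ℕ), x * y = Q →
      euler Q x (n + d) * euler Q y n = Q ^ (d.choose 2) * x ^ d * durfee Q d n := by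
    intro x y d n hxy
    have h1 := (qq_pos hQ0 hQ1 n).ne'
    have h2 := (qq_pos hQ0 hQ1 (n + d)).ne'
    have hx : x ^ (n + d) * y ^ n = Q ^ n * x ^ d := by rw [← hxy, mul_pow, pow_add]; ring
    have hc : Q ^ ((n + d).choose 2) * Q ^ (n.choose 2) * Q ^ n =
        Q ^ (n * (n + d)) * Q ^ (d.choose 2) := by
      rw [← pow_add, ← pow_add, ← pow_add]
      congr 1
      have := choose_two_diag n d
      rw [choose_two_succ] at this
      omega
    unfold euler durfee
    rw [div_mul_div_comm, mul_div_assoc', mul_comm (qPochR Q Q (n + d))]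
    congr 1
    calc _ = Q ^ ((n + d).choose 2) * Q ^ (n.choose 2) * (x ^ (n + d) * y ^ n) := by ring
      _ = (Q ^ ((n + d).choose 2) * Q ^ (n.choose 2) * Q ^ n) * x ^ d := by rw [hx]; ring
      _ = _ := by rw [hc]; ring
  have h := hasSum_diag hprod
    (A := fun d => Q ^ (d.choose 2) * z ^ d * (1 / qPochInfR Q Q))
    (B := fun d => Q ^ ((d + 1).choose 2) * w ^ (d + 1) * (1 / qPochInfR Q Q))
    (fun d => by
      simp only [term z w d _ hzw]
      exact (hasSum_durfee hQ0 hQ1 d).mul_left _)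
    (fun d => by
      simp only [mul_comm (euler Q z _), add_assoc, term w z (d + 1) _ (by rw [mul_comm, hzw])]
      exact (hasSum_durfee hQ0 hQ1 (d + 1)).mul_left _)
  refine (h.mul_right (qPochInfR Q Q)).congr_fun fun d => ?_
  field_simp

lemma qPochInfR_neg_one {Q : ℝ} (hQ0 : 0 < Q) (hQ1 : Q < 1) :
    qPochInfR (-1) Q = 2 * qPochInfR (-Q) Q := by
  have h1 := (tendsto_qPochR (-1) hQ0 hQ1).comp (tendsto_add_atTop_nat 1)
  have h2 := (tendsto_qPochR (-Q) hQ0 hQ1).const_mul 2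
  refine tendsto_nhds_unique h1 (h2.congr fun n => ?_)
  simp only [Function.comp_apply, qPochR, Finset.prod_range_succ']
  rw [mul_comm 2]
  congr 1
  · exact Finset.prod_congr rfl fun k _ => by ring
  · norm_num

lemma qPochInfR_sq {Q : ℝ} (hQ0 : 0 < Q) (hQ1 : Q < 1) :
    qPochInfR (Q ^ 2) (Q ^ 2) = qPochInfR Q Q * qPochInfR (-Q) Q := by
  have h1 := tendsto_qPochR (Q ^ 2) (pow_pos hQ0 2) (pow_lt_one₀ hQ0.le hQ1 two_ne_zero)
  have h2 := (tendsto_qPochR Q hQ0 hQ1).mul (tendsto_qPochR (-Q) hQ0 hQ1)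
  refine tendsto_nhds_unique h1 (h2.congr fun n => ?_)
  simp only [qPochR, ← Finset.prod_mul_distrib]
  exact Finset.prod_congr rfl fun k _ => by ring

/-- Gauss: `∑ Q^{d(d+1)/2} = (Q²;Q²)_∞² / (Q;Q)_∞`, the case `z = Q`, `w = 1` of the triple
product. -/
lemma hasSum_gauss {Q : ℝ} (hQ0 : 0 < Q) (hQ1 : Q < 1) :
    HasSum (fun d : ℕ => Q ^ ((d + 1).choose 2))
      (qPochInfR (Q ^ 2) (Q ^ 2) ^ 2 / qPochInfR Q Q) := by
  have hP := (qqInf_pos hQ0 hQ1).ne'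
  have h := (hasSum_jacobi hQ0 hQ1 hQ0 one_pos (mul_one Q)).div_const 2
  rw [qPochInfR_neg_one hQ0 hQ1] at h
  rw [qPochInfR_sq hQ0 hQ1]
  have hval : (qPochInfR Q Q * qPochInfR (-Q) Q) ^ 2 / qPochInfR Q Q =
      qPochInfR (-Q) Q * (2 * qPochInfR (-Q) Q) * qPochInfR Q Q / 2 := by
    field_simp
  rw [hval]
  refine h.congr_fun fun d => ?_
  rw [choose_two_succ, ← pow_add, add_comm d, one_pow, mul_one, add_self_div_two]

lemma rpow_choose_two {q : ℝ} (hq0 : 0 < q) (α : ℝ) (d : ℕ) :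
    (q ^ (4 * α)) ^ ((d + 1).choose 2) = q ^ (2 * α * (d : ℝ) ^ 2 + 2 * α * (d : ℝ)) := by
  rw [← Real.rpow_natCast, ← Real.rpow_mul hq0.le, Nat.cast_choose_two]
  congr 1
  push_cast
  ring

end PartialNahm

open PartialNahm

/-- Theorem 6.11: for every `α > 0` and `0 < q < 1` (real exponents by `rpow`),
the two identities for the matrix `A = M(α, 1-α, α)`. -/
theorem rank_two_partial_Nahm_alpha_1malpha_alpha (α : ℝ) (hα : 0 < α)
    (q : ℝ) (hq0 : 0 < q) (hq1 : q < 1) :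
    (∑' p : ℕ × ℕ,
        q ^ (2 * α * (p.1 : ℝ) ^ 2 + 4 * (1 - α) * (p.1 : ℝ) * (p.2 : ℝ) +
              2 * α * (p.2 : ℝ) ^ 2 + (2 * α - 1) * ((p.1 : ℝ) - (p.2 : ℝ))) /
          (qPochR q q (2 * p.1 + 1) * qPochR q q (2 * p.2))) =
      qPochInfR (-q) (q ^ (4 * α)) * qPochInfR (-(q ^ (4 * α - 1))) (q ^ (4 * α)) *
          qPochInfR (q ^ (4 * α)) (q ^ (4 * α)) / qPochInfR q q ∧
    (∑' p : ℕ × ℕ,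
        q ^ (2 * α * (p.1 : ℝ) ^ 2 + 4 * (1 - α) * (p.1 : ℝ) * (p.2 : ℝ) +
              2 * α * (p.2 : ℝ) ^ 2 + 2 * α * (p.1 : ℝ) + (2 - 2 * α) * (p.2 : ℝ)) /
          (qPochR q q (2 * p.1 + 1) * qPochR q q (2 * p.2))) =
      qPochInfR (q ^ (8 * α)) (q ^ (8 * α)) ^ 2 /
        (qPochInfR q q * qPochInfR (q ^ (4 * α)) (q ^ (4 * α))) := by
  have hQ0 : 0 < q ^ (4 * α) := Real.rpow_pos_of_pos hq0 _
  have hQ1 : q ^ (4 * α) < 1 := Real.rpow_lt_one hq0.le hq1 (by positivity)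
  have hden : ∀ m n, 0 ≤ qPochR q q m * qPochR q q n := fun m n =>
    (mul_pos (qq_pos hq0 hq1 m) (qq_pos hq0 hq1 n)).le
  constructor
  · refine tsum_of_interlaced
      (a := fun d => durfeeShift q (2 * d))
      (c := fun d => q ^ (2 * α * (d : ℝ) ^ 2 + (2 * α - 1) * (d : ℝ)))
      (s := fun d => (1 + q ^ (2 * d + 1)) / qPochInfR q q)
      (fun p => div_nonneg (Real.rpow_pos_of_pos hq0 _).le (hden _ _))
      (fun d => hasSum_durfeeShift hq0 hq1 (2 * d)) ?_ ?_ ?_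
    · intro d n
      simp only [durfeeShift]
      rw [mul_div_assoc', ← Real.rpow_natCast q, ← Real.rpow_add hq0,
        mul_comm (qPochR q q (2 * n)), show 2 * (n + d) + 1 = 2 * n + 2 * d + 1 by ring]
      congr 2
      push_cast
      ring
    · intro d n
      simp only [durfeeShift]
      rw [mul_div_assoc', ← Real.rpow_natCast q, ← Real.rpow_add hq0,
        show 2 * (n + d + 1) = 2 * n + 1 + 2 * d + 1 by ring]
      congr 2
      push_cast
      ring
    · have hz0 : 0 < q ^ (4 * α - 1) := Real.rpow_pos_of_pos hq0 _
      have hzw : q ^ (4 * α - 1) * q = q ^ (4 * α) := by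
        rw [← Real.rpow_add_one hq0.ne', sub_add_cancel]
      have h := (hasSum_jacobi hQ0 hQ1 hz0 hq0 hzw).div_const (qPochInfR q q)
      rw [mul_comm (qPochInfR (-(q ^ (4 * α - 1))) _)] at h
      refine h.congr_fun fun d => ?_
      rw [mul_div_assoc']
      congr 1
      -- `Q^{d(d-1)/2} (Q/q)^d` and `Q^{d(d+1)/2} q^{d+1}` differ by the factor `q^{2d+1}`.
      have e1 : (q ^ (4 * α)) ^ (d.choose 2) * (q ^ (4 * α - 1)) ^ d =
          q ^ (2 * α * (d : ℝ) ^ 2 + (2 * α - 1) * (d : ℝ)) := by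
        rw [← Real.rpow_natCast, ← Real.rpow_natCast, ← Real.rpow_mul hq0.le,
          ← Real.rpow_mul hq0.le, ← Real.rpow_add hq0, Nat.cast_choose_two]
        congr 1
        ring
      have e2 : (q ^ (4 * α)) ^ ((d + 1).choose 2) * q ^ (d + 1) =
          q ^ (2 * α * (d : ℝ) ^ 2 + (2 * α - 1) * (d : ℝ)) * q ^ (2 * d + 1) := by
        rw [rpow_choose_two hq0, ← Real.rpow_natCast q, ← Real.rpow_natCast q,
          ← Real.rpow_add hq0, ← Real.rpow_add hq0]
        congr 1
        push_cast
        ring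
      rw [e1, e2]
      ring
  · refine tsum_of_interlaced
      (a := fun d => durfee q (2 * d + 1))
      (c := fun d => q ^ (2 * α * (d : ℝ) ^ 2 + 2 * α * (d : ℝ)))
      (s := fun _ => 1 / qPochInfR q q)
      (fun p => div_nonneg (Real.rpow_pos_of_pos hq0 _).le (hden _ _))
      (fun d => hasSum_durfee hq0 hq1 (2 * d + 1)) ?_ ?_ ?_
    · intro d n
      simp only [durfee]
      rw [mul_div_assoc', ← Real.rpow_natCast q, ← Real.rpow_add hq0,
        mul_comm (qPochR q q (2 * n)), show 2 * (n + d) + 1 = 2 * n + (2 * d + 1) by ring]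
      congr 2
      push_cast
      ring
    · intro d n
      simp only [durfee]
      rw [mul_div_assoc', ← Real.rpow_natCast q, ← Real.rpow_add hq0,
        show 2 * (n + d + 1) = 2 * n + 1 + (2 * d + 1) by ring]
      congr 2
      push_cast
      ring
    · have h := (hasSum_gauss hQ0 hQ1).mul_right (1 / qPochInfR q q)
      simp only [rpow_choose_two hq0] at h
      have h8 : (q ^ (4 * α)) ^ 2 = q ^ (8 * α) := by
        rw [← Real.rpow_natCast, ← Real.rpow_mul hq0.le]
        congr 1
        push_cast
        ring
      rw [h8, div_mul_div_comm, mul_one, mul_comm (qPochInfR (q ^ (4 * α)) _)] at h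
      exact h
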